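/- Upward closure of the Prefix Last-Token Condition: let s be a nonempty string and let w be a non-atomic canonical token that is a suffix of s and satisfies the Prefix Last-Token Condition with respect to s. Then suc(w) (which is also a canonical suffix of s) satisfies the Prefix Last-Token Condition with respect to s. -/

import Mathlib

/-!
Common BPE formalization preamble.

A token is a (nonempty) string over the alphabet `α`, modeled as `List α`.
A merge rule is a pair of tokens; a dictionary is an ordered list of rules
(earlier rules have strictly higher priority).
-/

namespace BPE

variable {α : Type*} [DecidableEq α]

/-- A token is a string over the alphabet (nonemptiness is imposed by hypotheses). -/
abbrev Token (α : Type*) := List α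

/-- A merge rule is an ordered pair of tokens. -/
abbrev Rule (α : Type*) := Token α × Token α

/-- A dictionary is an ordered list of merge rules; earlier = higher priority. -/
abbrev Dict (α : Type*) := List (Rule α)

/-- Apply a single merge rule to a token list, scanning left to right and replacing
each adjacent occurrence of `r.1` followed by `r.2` by the concatenated token,
resuming the scan after the newly formed token (no overlaps). -/
def applyRule (r : Rule α) : List (Token α) → List (Token α)
  | [] => []
  | [t] => [t]
  | t :: u :: rest =>
      if t = r.1 ∧ u = r.2 then (r.1 ++ r.2) :: applyRule r rest
      else t :: applyRule r (u :: rest)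

/-- `φ₀(s)`: the list of single-character tokens of `s`. -/
def phi0 (s : List α) : List (Token α) := s.map (fun c => [c])

/-- `φ_k(s)`: the token list after applying the first `k` rules of `D` to `s`. -/
def phiK (D : Dict α) (k : ℕ) (s : List α) : List (Token α) :=
  (D.take k).foldl (fun φ r => applyRule r φ) (phi0 s)

/-- The BPE tokenization `𝕋_D(s)`. -/
def tokenize (D : Dict α) (s : List α) : List (Token α) :=
  phiK D D.length s

/-- Detokenization `π`: concatenation of the tokens. -/
def detok (φ : List (Token α)) : List α := φ.flatten

/-- A dictionary is valid if all rule components are genuine (nonempty) tokens. -/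
def ValidDict (D : Dict α) : Prop := ∀ r ∈ D, r.1 ≠ [] ∧ r.2 ≠ []

/-- A token `t` is canonical if `𝕋_D(t) = [t]`. -/
def IsCanonical (D : Dict α) (t : Token α) : Prop := tokenize D t = [t]

/-- The last token `θ(s)`: last element of `𝕋_D(s)` (defaulting to `[]`). -/
def theta (D : Dict α) (s : List α) : Token α := (tokenize D s).getLastD []

/-- `j` (0-based) is the index of the canonical rule of `t`:
`φ_j(t)` has exactly two tokens and `φ_{j+1}(t) = [t]`. -/
def IsCanonicalRuleIdx (D : Dict α) (t : Token α) (j : ℕ) : Prop :=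
  j < D.length ∧ (phiK D j t).length = 2 ∧ phiK D (j + 1) t = [t]

open Classical in
/-- The (0-based) index of the canonical rule of `t` (junk value `0` if none exists). -/
noncomputable def canonIdx (D : Dict α) (t : Token α) : ℕ :=
  if h : ∃ j, IsCanonicalRuleIdx D t j then h.choose else 0

/-- Predecessor `pre(t)`: first token of the two-token stage `φ_{j-1}(t)`. -/
noncomputable def pre (D : Dict α) (t : Token α) : Token α :=
  (phiK D (canonIdx D t) t).headD []

/-- Successor `suc(t)`: second token of the two-token stage `φ_{j-1}(t)`. -/
noncomputable def suc (D : Dict α) (t : Token α) : Token α :=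
  (phiK D (canonIdx D t) t).getLastD []

/-- `InPath D x a` means `a ∈ P(x)`: `a` is obtained from `x` by iterating `suc`,
i.e. `a` lies on the ancestor path of `x` in the Successor Forest. -/
def InPath (D : Dict α) (x a : Token α) : Prop :=
  ∃ n : ℕ, (suc D)^[n] x = a

/-- `s` with the suffix `u` removed. -/
def dropSuffix (s u : List α) : List α := s.take (s.length - u.length)

/-- The Prefix Last-Token Condition of the canonical suffix token `t`
with respect to the string `s`. Atomic tokens satisfy it by definition;
a non-atomic token must satisfy Reachability and Priority dominance. -/
def PLTC (D : Dict α) (s t : Token α) : Prop :=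
  t.length = 1 ∨
    (1 < t.length ∧
      InPath D (theta D (dropSuffix s (suc D t))) (pre D t) ∧
      (theta D (dropSuffix s (suc D t)) ≠ pre D t →
        ∀ u : Token α, 1 < u.length → IsCanonical D u → suc D u = pre D t →
          InPath D (theta D (dropSuffix s (suc D t))) u →
          canonIdx D t < canonIdx D u))


section Helpers

theorem applyRule_append_inv (r : Rule α) (φ c d : List (Token α))
    (h : applyRule r φ = c ++ d) :
    ∃ a b, φ = a ++ b ∧ applyRule r a = c ∧ applyRule r b = d := by
  induction φ using applyRule.induct r generalizing c with
  | case1 =>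
    simp only [applyRule] at h
    have := List.nil_eq_append_iff.mp h
    exact ⟨[], [], by simp, by simp [applyRule, this.1], by simp [applyRule, this.2]⟩
  | case2 t =>
    cases c with
    | nil => exact ⟨[], [t], by simp, by simp [applyRule], by simpa using h⟩
    | cons x c =>
      simp only [applyRule, List.cons_append, List.cons.injEq] at h
      have := List.nil_eq_append_iff.mp h.2
      exact ⟨[t], [], by simp, by simp [applyRule, this.1, h.1], by simp [applyRule, this.2]⟩
  | case3 t u rest hm ih =>
    cases c with
    | nil => exact ⟨[], t :: u :: rest, by simp, by simp [applyRule], by simpa using h⟩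
    | cons x c =>
      rw [applyRule, if_pos hm] at h
      simp only [List.cons_append, List.cons.injEq] at h
      obtain ⟨a, b, h1, h2, h3⟩ := ih c h.2
      refine ⟨t :: u :: a, b, by simp [h1], ?_, h3⟩
      rw [applyRule, if_pos hm, h2, h.1]
  | case4 t u rest hm ih =>
    cases c with
    | nil => exact ⟨[], t :: u :: rest, by simp, by simp [applyRule], by simpa using h⟩
    | cons x c =>
      rw [applyRule, if_neg hm] at h
      simp only [List.cons_append, List.cons.injEq] at h
      obtain ⟨a, b, h1, h2, h3⟩ := ih c h.2
      refine ⟨t :: a, b, by simp [h1], ?_, h3⟩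
      cases a with
      | nil => simp only [applyRule] at h2 ⊢; rw [h.1, ← h2]
      | cons v a =>
        simp only [List.cons_append, List.cons.injEq] at h1
        rw [applyRule, ← h1.1, if_neg hm]
        rw [← h1.1] at h2
        rw [h2, h.1]

theorem applyRule_flatten (r : Rule α) (φ : List (Token α)) :
    (applyRule r φ).flatten = φ.flatten := by
  induction φ using applyRule.induct r with
  | case1 => simp [applyRule]
  | case2 t => simp [applyRule]
  | case3 t u rest hm ih => rw [applyRule, if_pos hm]; simp [ih, hm.1, hm.2]
  | case4 t u rest hm ih =>
    rw [applyRule, if_neg hm, List.flatten_cons, ih]; simp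

theorem applyRule_length (r : Rule α) (φ : List (Token α)) :
    φ.length ≤ 2 * (applyRule r φ).length := by
  induction φ using applyRule.induct r with
  | case1 => simp [applyRule]
  | case2 t => simp [applyRule]
  | case3 t u rest hm ih => rw [applyRule, if_pos hm]; simp; omega
  | case4 t u rest hm ih => rw [applyRule, if_neg hm]; simp at *; omega

theorem applyRule_ne (r : Rule α) (φ : List (Token α)) (h : ∀ t ∈ φ, t ≠ []) :
    ∀ t ∈ applyRule r φ, t ≠ [] := by
  induction φ using applyRule.induct r with
  | case1 => simp [applyRule]
  | case2 t => simpa [applyRule] using h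
  | case3 t u rest hm ih =>
    rw [applyRule, if_pos hm]
    have ht : t ≠ [] := h t (by simp)
    intro x hx
    rcases List.mem_cons.mp hx with rfl | hx
    · rw [← hm.1]; simp [ht]
    · exact ih (fun y hy => h y (by simp [hy])) x hx
  | case4 t u rest hm ih =>
    rw [applyRule, if_neg hm]
    intro x hx
    rcases List.mem_cons.mp hx with rfl | hx
    · exact h _ (by simp)
    · exact ih (fun y hy => h y (List.mem_cons_of_mem _ hy)) x hx

theorem applyRule_glue (r : Rule α) (A P Q : List (Token α)) (hP : P ≠ [])
    (hne : ∀ t ∈ P, t ≠ [])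
    (h1 : applyRule r (A ++ P) = applyRule r A ++ applyRule r P)
    (h2 : applyRule r (P ++ Q) = applyRule r P ++ applyRule r Q) :
    applyRule r (A ++ (P ++ Q)) = applyRule r A ++ (applyRule r P ++ applyRule r Q) := by
  induction A using applyRule.induct r with
  | case1 => simpa [applyRule] using h2
  | case2 t =>
    cases P with
    | nil => exact absurd rfl hP
    | cons u P =>
      have hu : u ≠ [] := hne u (by simp)
      have e : applyRule r [t] = [t] := by simp only [applyRule]
      rw [e] at h1 ⊢
      simp only [List.cons_append, List.nil_append] at h1 h2 ⊢
      by_cases hm : t = r.1 ∧ u = r.2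
      · rw [applyRule, if_pos hm] at h1
        simp only [applyRule, List.cons_append, List.cons.injEq] at h1
        have := h1.1
        rw [← hm.1, ← hm.2] at this
        simp [hu] at this
      · rw [applyRule, if_neg hm, h2]
  | case3 t u rest hm ih =>
    simp only [List.cons_append] at h1 ⊢
    rw [applyRule, if_pos hm] at h1 ⊢
    rw [applyRule, if_pos hm] at h1 ⊢
    simp only [List.cons_append, List.cons.injEq, true_and] at h1 ⊢
    exact ih h1
  | case4 t u rest hm ih =>
    simp only [List.cons_append] at h1 ih ⊢
    rw [applyRule, if_neg hm] at h1 ⊢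
    rw [applyRule, if_neg hm] at h1 ⊢
    simp only [List.cons_append, List.cons.injEq, true_and] at h1 ⊢
    exact ih h1

theorem applyRule_pair (r : Rule α) (P : List (Token α)) (x y : Token α) (hx : x ≠ [])
    (h1 : applyRule r (P ++ [x, y]) = applyRule r P ++ [x ++ y]) :
    applyRule r (P ++ [x]) = applyRule r P ++ [x] := by
  induction P using applyRule.induct r with
  | case1 => simp [applyRule]
  | case2 t =>
    have e : applyRule r [t] = [t] := by simp only [applyRule]
    rw [e] at h1 ⊢
    simp only [List.cons_append, List.nil_append] at h1 ⊢
    by_cases hm : t = r.1 ∧ x = r.2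
    · rw [applyRule, if_pos hm] at h1
      simp only [applyRule, List.cons_append, List.cons.injEq] at h1
      have := h1.1
      rw [← hm.1, ← hm.2] at this
      simp [hx] at this
    · rw [applyRule, if_neg hm]; simp [applyRule]
  | case3 t u rest hm ih =>
    simp only [List.cons_append] at h1 ⊢
    rw [applyRule, if_pos hm] at h1 ⊢
    rw [applyRule, if_pos hm] at h1 ⊢
    simp only [List.cons_append, List.cons.injEq, true_and] at h1 ⊢
    exact ih h1
  | case4 t u rest hm ih =>
    simp only [List.cons_append] at h1 ih ⊢
    rw [applyRule, if_neg hm] at h1 ⊢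
    rw [applyRule, if_neg hm] at h1 ⊢
    simp only [List.cons_append, List.cons.injEq, true_and] at h1 ⊢
    exact ih h1

theorem phiK_zero (D : Dict α) (s : List α) : phiK D 0 s = phi0 s := by simp [phiK]

/-- One step of `phiK`, either a rule application or the identity past the end of `D`. -/
theorem phiK_succ (D : Dict α) (k : ℕ) (s : List α) :
    phiK D (k + 1) s =
      match D[k]? with
      | some r => applyRule r (phiK D k s)
      | none => phiK D k s := by
  unfold phiK
  rw [List.take_add_one, List.foldl_append]
  cases D[k]? <;> simp

theorem phiK_flatten (D : Dict α) (k : ℕ) (s : List α) : (phiK D k s).flatten = s := by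
  induction k with
  | zero => rw [phiK_zero]; induction s with
    | nil => simp [phi0]
    | cons a s ih => simpa [phi0] using ih
  | succ k ih =>
    rw [phiK_succ]
    cases D[k]? with
    | none => exact ih
    | some r => simp only [applyRule_flatten, ih]

theorem phiK_ne (D : Dict α) (k : ℕ) (s : List α) : ∀ t ∈ phiK D k s, t ≠ [] := by
  induction k with
  | zero => rw [phiK_zero]; simp [phi0]
  | succ k ih =>
    rw [phiK_succ]
    cases D[k]? with
    | none => exact ih
    | some r => exact applyRule_ne r _ ih

theorem phiK_append_inv (D : Dict α) (k : ℕ) (s : List α) (c d : List (Token α))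
    (h : phiK D k s = c ++ d) : phiK D k c.flatten = c ∧ phiK D k d.flatten = d := by
  induction k generalizing c d with
  | zero =>
    rw [phiK_zero] at *
    rw [phiK_zero]
    unfold phi0 at h
    obtain ⟨a, b, rfl, rfl, rfl⟩ := List.map_eq_append_iff.mp h
    have key : ∀ l : List α, (List.map (fun c => [c]) l).flatten = l := by
      intro l; induction l with
      | nil => rfl
      | cons x l ih => simpa using ih
    rw [key, key]; exact ⟨rfl, rfl⟩
  | succ k ih =>
    rw [phiK_succ] at h
    rw [phiK_succ, phiK_succ]
    cases hr : D[k]? with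
    | none => rw [hr] at h; exact ih c d h
    | some r =>
      rw [hr] at h
      obtain ⟨a, b, h1, rfl, rfl⟩ := applyRule_append_inv r _ c d h
      obtain ⟨ha, hb⟩ := ih a b h1
      simp only [applyRule_flatten, ha, hb, and_self]

/-- The boundary between `a` and `b` survives `k` rules. -/
def Split (D : Dict α) (k : ℕ) (a b : List α) : Prop :=
  phiK D k (a ++ b) = phiK D k a ++ phiK D k b

theorem split_of_eq {D : Dict α} {k : ℕ} {s : List α} {c d : List (Token α)}
    (h : phiK D k s = c ++ d) :
    s = c.flatten ++ d.flatten ∧ phiK D k c.flatten = c ∧ phiK D k d.flatten = d ∧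
      Split D k c.flatten d.flatten := by
  obtain ⟨h1, h2⟩ := phiK_append_inv D k s c d h
  have hs : s = c.flatten ++ d.flatten := by
    rw [← List.flatten_append, ← h, phiK_flatten]
  refine ⟨hs, h1, h2, ?_⟩
  unfold Split
  rw [← hs, h, h1, h2]

theorem split_pred {D : Dict α} {k : ℕ} {a b : List α} (h : Split D (k + 1) a b) :
    Split D k a b := by
  unfold Split at *
  simp only [phiK_succ] at h
  cases hr : D[k]? with
  | none => rw [hr] at h; exact h
  | some r =>
    rw [hr] at h
    obtain ⟨x, y, h1, h2, h3⟩ := applyRule_append_inv r _ _ _ h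
    obtain ⟨hx, hy⟩ := phiK_append_inv D k _ x y h1
    have e1 := congrArg List.flatten h2
    have e2 := congrArg List.flatten h3
    simp only [applyRule_flatten, phiK_flatten] at e1 e2
    rw [h1, ← e1, ← e2, hx, hy]

theorem split_le {D : Dict α} {k l : ℕ} {a b : List α} (hl : l ≤ k) (h : Split D k a b) :
    Split D l a b := by
  induction k with
  | zero => have : l = 0 := by omega
            rwa [this]
  | succ k ih =>
    rcases Nat.lt_or_ge k l with h' | h'
    · have : l = k + 1 := by omega
      rwa [this]
    · exact ih h' (split_pred h)

theorem phiK_nonempty (D : Dict α) (k : ℕ) (s : List α) (hs : s ≠ []) : phiK D k s ≠ [] := by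
  intro h
  have := phiK_flatten D k s
  rw [h] at this
  exact hs this.symm

theorem split_glue {D : Dict α} {k : ℕ} {a p q : List α} (hp : p ≠ [])
    (h1 : Split D k a p) (h2 : Split D k p q) : Split D k (a ++ p) q := by
  have main : ∀ l ≤ k, phiK D l (a ++ (p ++ q)) = phiK D l a ++ (phiK D l p ++ phiK D l q) := by
    intro l
    induction l with
    | zero => intro _; simp [phiK_zero, phi0]
    | succ l ih =>
      intro hl
      have ih := ih (by omega)
      have s1 := split_le hl h1
      have s2 := split_le hl h2
      have t1 := split_pred s1
      have t2 := split_pred s2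
      unfold Split at s1 s2 t1 t2
      simp only [phiK_succ] at s1 s2 ⊢
      cases hr : D[l]? with
      | none => exact ih
      | some r =>
        rw [hr] at s1 s2
        simp only at s1 s2 ⊢
        rw [ih]
        rw [t1] at s1
        rw [t2] at s2
        exact applyRule_glue r _ _ _ (phiK_nonempty D l p hp) (phiK_ne D l p) s1 s2
  have := main k le_rfl
  unfold Split at *
  rw [List.append_assoc, this, h1, List.append_assoc]

theorem phiK_stable {D : Dict α} {k l : ℕ} {s t : List α} (h : phiK D k s = [t]) (hl : k ≤ l) :
    phiK D l s = [t] := by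
  induction l, hl using Nat.le_induction with
  | base => exact h
  | succ l hl ih =>
    rw [phiK_succ]
    cases D[l]? with
    | none => exact ih
    | some r => simp only [ih, applyRule]

theorem exists_idx {D : Dict α} {t : Token α} (hl : 1 < t.length) (hc : IsCanonical D t) :
    ∃ j, IsCanonicalRuleIdx D t j := by
  classical
  have hex : ∃ k, (phiK D k t).length ≤ 1 := ⟨D.length, by
    have : phiK D D.length t = [t] := hc
    simp [this]⟩
  have h0 : (phiK D 0 t).length = t.length := by simp [phiK_zero, phi0]
  have hspec := Nat.find_spec hex
  have hmin := fun m => Nat.find_min (m := m) hex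
  have hle : Nat.find hex ≤ D.length := Nat.find_min' hex (by
    have : phiK D D.length t = [t] := hc
    simp [this])
  obtain ⟨m, hm⟩ : ∃ m, Nat.find hex = m + 1 := by
    cases hn : Nat.find hex with
    | zero => rw [hn] at hspec; omega
    | succ m => exact ⟨m, rfl⟩
  rw [hm] at hspec hle
  have h2 := hmin m (by omega)
  have hlast : phiK D (m + 1) t = [t] := by
    have hf := phiK_flatten D (m + 1) t
    match hφ : phiK D (m + 1) t with
    | [] => rw [hφ] at hf; rw [← hf] at hl; simp at hl
    | [x] => rw [hφ] at hf; simp at hf; rw [hf]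
    | x :: y :: z => rw [hφ] at hspec; simp at hspec
  refine ⟨m, by omega, ?_, hlast⟩
  have hr : D[m]? = some D[m] := List.getElem?_eq_getElem (by omega)
  rw [phiK_succ, hr] at hlast
  have := applyRule_length D[m] (phiK D m t)
  simp only at hlast
  rw [hlast] at this
  simp at this
  omega

theorem canonIdx_spec {D : Dict α} {t : Token α} (hl : 1 < t.length) (hc : IsCanonical D t) :
    IsCanonicalRuleIdx D t (canonIdx D t) := by
  have h := exists_idx hl hc
  unfold canonIdx
  rw [dif_pos h]
  exact h.choose_spec

/-- Structure of a non-atomic canonical token. -/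
theorem structure_facts {D : Dict α} {t : Token α} (hl : 1 < t.length) (hc : IsCanonical D t) :
    t = pre D t ++ suc D t ∧ pre D t ≠ [] ∧ suc D t ≠ [] ∧
    canonIdx D t < D.length ∧ phiK D (canonIdx D t) t = [pre D t, suc D t] ∧
    phiK D (canonIdx D t + 1) t = [t] ∧
    phiK D (canonIdx D t) (pre D t) = [pre D t] ∧ phiK D (canonIdx D t) (suc D t) = [suc D t] ∧
    Split D (canonIdx D t) (pre D t) (suc D t) := by
  obtain ⟨h1, h2, h3⟩ := canonIdx_spec hl hc
  obtain ⟨p, q, hpq⟩ := List.length_eq_two.mp h2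
  have hp : pre D t = p := by simp [pre, hpq]
  have hq : suc D t = q := by simp [suc, hpq]
  have hne := phiK_ne D (canonIdx D t) t
  rw [hp, hq]
  have := split_of_eq (c := [p]) (d := [q]) hpq
  simp only [List.flatten_cons, List.flatten_nil, List.append_nil] at this
  rw [hpq] at hne
  exact ⟨this.1, hne p (by simp), hne q (by simp), h1, hpq, h3, this.2.1, this.2.2.1, this.2.2.2⟩

theorem suc_canonical {D : Dict α} {t : Token α} (hl : 1 < t.length) (hc : IsCanonical D t) :
    IsCanonical D (suc D t) := by
  obtain ⟨_, _, _, h, _, _, _, hq, _⟩ := structure_facts hl hc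
  exact phiK_stable hq h.le

theorem suc_length_lt {D : Dict α} {t : Token α} (hl : 1 < t.length) (hc : IsCanonical D t) :
    (suc D t).length < t.length := by
  obtain ⟨h, hp, _⟩ := structure_facts hl hc
  have h2 := congrArg List.length h
  rw [List.length_append] at h2
  have := List.length_pos_of_ne_nil hp
  omega

theorem phiK_atomic (D : Dict α) (k : ℕ) {t : Token α} (hl : t.length = 1) :
    phiK D k t = [t] := by
  obtain ⟨a, rfl⟩ := List.length_eq_one_iff.mp hl
  exact phiK_stable (k := 0) (by simp [phiK_zero, phi0]) (Nat.zero_le _)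

theorem suc_atomic (D : Dict α) {t : Token α} (hl : t.length = 1) : suc D t = t := by
  simp [suc, phiK_atomic D _ hl]

theorem path_facts {D : Dict α} {y : Token α} (hy : y ≠ []) (hc : IsCanonical D y) (n : ℕ) :
    (suc D)^[n] y ≠ [] ∧ IsCanonical D ((suc D)^[n] y) ∧ ((suc D)^[n] y).length ≤ y.length := by
  induction n with
  | zero => exact ⟨hy, hc, le_rfl⟩
  | succ n ih =>
    rw [Function.iterate_succ_apply']
    obtain ⟨h1, h2, h3⟩ := ih
    have := List.length_pos_of_ne_nil h1
    rcases Nat.lt_or_ge 1 ((suc D)^[n] y).length with h | h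
    · obtain ⟨_, _, hq, _⟩ := structure_facts h h2
      exact ⟨hq, suc_canonical h h2, (suc_length_lt h h2).le.trans h3⟩
    · rw [suc_atomic D (by omega)]
      exact ⟨h1, h2, h3⟩

theorem last_split {D : Dict α} {k : ℕ} {a b : List α} (hb : b ≠ []) (h : Split D k a b) :
    (phiK D k (a ++ b)).getLast? = (phiK D k b).getLast? := by
  rw [h]
  exact List.getLast?_append_of_ne_nil _ (phiK_nonempty D k b hb)

theorem last_suc {D : Dict α} {k : ℕ} {y : Token α} (hl : 1 < y.length) (hc : IsCanonical D y)
    (hk : k ≤ canonIdx D y) : (phiK D k y).getLast? = (phiK D k (suc D y)).getLast? := by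
  obtain ⟨h, _, hq, _, _, _, _, _, hs⟩ := structure_facts hl hc
  have := last_split hq (split_le hk hs)
  rwa [← h] at this

theorem inPath_of_last {D : Dict α} {k : ℕ} : ∀ (n : ℕ) {y z : Token α}, y.length = n → y ≠ [] →
    IsCanonical D y → (phiK D k y).getLast? = some z → InPath D y z := by
  intro n
  induction n using Nat.strong_induction_on with
  | _ n ih =>
    intro y z hn hy hc hz
    have := List.length_pos_of_ne_nil hy
    rcases Nat.lt_or_ge 1 y.length with h | h
    · rcases Nat.lt_or_ge (canonIdx D y) k with hk | hk
      · obtain ⟨_, _, _, _, _, h1, _⟩ := structure_facts h hc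
        rw [phiK_stable h1 hk] at hz
        exact ⟨0, by simpa using hz⟩
      · rw [last_suc h hc hk] at hz
        obtain ⟨_, _, hq, _⟩ := structure_facts h hc
        obtain ⟨m, hm⟩ := ih _ (hn ▸ suc_length_lt h hc) rfl hq (suc_canonical h hc) hz
        exact ⟨m + 1, by rw [Function.iterate_succ_apply]; exact hm⟩
    · rw [phiK_atomic D k (by omega)] at hz
      exact ⟨0, by simpa using hz⟩

theorem last_ge {D : Dict α} {k : ℕ} (n : ℕ) : ∀ {y u b : Token α}, y ≠ [] →
    IsCanonical D y → (suc D)^[n] y = u → phiK D k u = [u] →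
    (phiK D k y).getLast? = some b → u.length ≤ b.length := by
  induction n with
  | zero =>
    intro y u b hy hc hu hk hb
    simp only [Function.iterate_zero, id] at hu
    subst hu
    rw [hk] at hb
    simp at hb
    rw [hb]
  | succ n ih =>
    intro y u b hy hc hu hk hb
    have hlen := (path_facts hy hc (n + 1)).2.2
    rw [hu] at hlen
    rw [Function.iterate_succ_apply] at hu
    have := List.length_pos_of_ne_nil hy
    rcases Nat.lt_or_ge 1 y.length with h | h
    · obtain ⟨_, _, hq, _, _, h1, _⟩ := structure_facts h hc
      rcases Nat.lt_or_ge (canonIdx D y) k with hk' | hk'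
      · rw [phiK_stable h1 hk'] at hb
        simp at hb
        rwa [← hb]
      · rw [last_suc h hc hk'] at hb
        exact ih hq (suc_canonical h hc) hu hk hb
    · rw [suc_atomic D (by omega)] at hu
      exact ih hy hc hu hk hb

/-- If the child `u` of `p` on the path from `y` is formed at or after stage `j` then the last token
of `y` at stage `j` is `p`. -/
theorem last_of_child {D : Dict α} {j : ℕ} {u p : Token α} (hul : 1 < u.length)
    (huc : IsCanonical D u) (hup : suc D u = p) (hp : phiK D j p = [p])
    (hj : j ≤ canonIdx D u) (n : ℕ) : ∀ {y : Token α}, y ≠ [] →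
    IsCanonical D y → (suc D)^[n] y = u → (phiK D j y).getLast? = some p := by
  induction n with
  | zero =>
    intro y hy hc hu
    simp only [Function.iterate_zero, id] at hu
    subst hu
    rw [last_suc hul huc hj, hup, hp]
    rfl
  | succ n ih =>
    intro y hy hc hu
    rw [Function.iterate_succ_apply] at hu
    have := List.length_pos_of_ne_nil hy
    rcases Nat.lt_or_ge 1 y.length with h | h
    · obtain ⟨_, _, hq, _, _, h1, _, hq1, _⟩ := structure_facts h hc
      have hqc := suc_canonical h hc
      have hl := ih hq hqc hu
      rcases Nat.lt_or_ge (canonIdx D y) j with hk' | hk'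
      · exfalso
        rw [phiK_stable hq1 hk'.le] at hl
        simp at hl
        have h2 := (path_facts hq hqc n).2.2
        rw [hu, hl, ← hup] at h2
        have := suc_length_lt hul huc
        omega
      · rw [last_suc h hc hk', hl]
    · rw [suc_atomic D (by omega)] at hu
      exact ih hy hc hu

/-- The last token is canonical and its left boundary survives. -/
theorem theta_facts (D : Dict α) (s : List α) (hs : s ≠ []) :
    theta D s ≠ [] ∧ IsCanonical D (theta D s) ∧
      ∀ k ≤ D.length, (phiK D k s).getLast? = (phiK D k (theta D s)).getLast? := by
  have hne := phiK_nonempty D D.length s hs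
  have hd := List.dropLast_append_getLast hne
  have ht : theta D s = (phiK D D.length s).getLast hne := by
    unfold theta tokenize
    rw [List.getLastD_eq_getLast?, List.getLast?_eq_some_getLast hne]
    rfl
  rw [← ht] at hd
  have h0 : theta D s ≠ [] := by
    rw [ht]; exact phiK_ne D _ s _ (List.getLast_mem hne)
  have h := split_of_eq hd.symm
  simp only [List.flatten_cons, List.flatten_nil, List.append_nil] at h
  refine ⟨h0, h.2.2.1, fun k hk => ?_⟩
  have := last_split h0 (split_le hk h.2.2.2)
  rwa [← h.1] at this

end Helpers

/-- **Upward closure of the Prefix Last-Token Condition.** If a non-atomic canonical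
suffix `w` of the nonempty string `s` satisfies the Prefix Last-Token Condition with
respect to `s`, then `suc w` (also a canonical suffix of `s`) satisfies it too. -/
theorem upward_closure [Fintype α] (D : Dict α) (hD : ValidDict D)
    (s : List α) (hs : s ≠ [])
    (w : Token α) (hwl : 1 < w.length) (hwc : IsCanonical D w) (hws : w <:+ s)
    (h : PLTC D s w) :
    IsCanonical D (suc D w) ∧ suc D w <:+ s ∧ PLTC D s (suc D w) := by
  have hqc := suc_canonical hwl hwc
  obtain ⟨hw, hp0, hq0, hjD, -, -, hjp, hjq, hsp⟩ := structure_facts hwl hwc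
  rcases h with h | ⟨-, hreach, hdom⟩
  · omega
  generalize hj : canonIdx D w = j at *
  generalize hp : pre D w = p at *
  generalize hq : suc D w = q at *
  obtain ⟨a, ha⟩ := hws
  have hs1 : s = (a ++ p) ++ q := by rw [← ha, hw, List.append_assoc]
  refine ⟨hqc, ⟨a ++ p, hs1.symm⟩, ?_⟩
  have hqpos := List.length_pos_of_ne_nil hq0
  rcases Nat.lt_or_ge 1 q.length with hql | hql
  swap
  · left; omega
  right
  refine ⟨hql, ?_⟩
  obtain ⟨hqe, hp'0, hq'0, hiD, hi2, hi1, hip', hiq', hsp'⟩ := structure_facts hql hqc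
  generalize hi : canonIdx D q = i at *
  generalize hp' : pre D q = p' at *
  generalize hq' : suc D q = q' at *
  have hij : i < j := by
    by_contra hcon
    have := phiK_stable hjq (Nat.le_of_not_lt hcon)
    rw [hi2] at this
    simp at this
  have hd1 : dropSuffix s q = a ++ p := by
    rw [hs1]; unfold dropSuffix
    rw [List.length_append (as := a ++ p), Nat.add_sub_cancel, List.take_left]
  have hd2 : dropSuffix s q' = (a ++ p) ++ p' := by
    rw [hs1, hqe, ← List.append_assoc]; unfold dropSuffix
    rw [List.length_append (as := a ++ p ++ p'), Nat.add_sub_cancel, List.take_left]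
  rw [hd1] at hreach hdom
  rw [hd2]
  -- the last token of `a ++ p` at stage `j` is `p`
  obtain ⟨hx0, hxc, hxl⟩ := theta_facts D (a ++ p) (by simp [hp0])
  have hlast : (phiK D j (a ++ p)).getLast? = some p := by
    rw [hxl j hjD.le]
    by_cases hxp : theta D (a ++ p) = p
    · rw [hxp, hjp]; rfl
    · classical
      have hfind := Nat.find_spec hreach
      have hmin := fun m => Nat.find_min (m := m) hreach
      cases hn : Nat.find hreach with
      | zero => rw [hn] at hfind; exact absurd hfind hxp
      | succ n =>
        rw [hn] at hfind
        rw [Function.iterate_succ_apply'] at hfind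
        have hnp := hmin n (by omega)
        obtain ⟨f1, f2, f3⟩ := path_facts hx0 hxc n
        have hpos := List.length_pos_of_ne_nil f1
        have hul : 1 < ((suc D)^[n] (theta D (a ++ p))).length := by
          by_contra hcon
          rw [suc_atomic D (by omega)] at hfind
          exact hnp hfind
        have hlt := hdom hxp _ hul f2 hfind ⟨n, rfl⟩
        exact last_of_child hul f2 hfind hjp hlt.le n hx0 hxc rfl
  have hsap : Split D j a p := by
    have hne := phiK_nonempty D j (a ++ p) (by simp [hp0])
    have hd := List.dropLast_append_getLast hne
    rw [List.getLast?_eq_some_getLast hne, Option.some.injEq] at hlast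
    rw [hlast] at hd
    have h := split_of_eq hd.symm
    simp only [List.flatten_cons, List.flatten_nil, List.append_nil] at h
    have : a = (phiK D j (a ++ p)).dropLast.flatten := List.append_cancel_right h.1
    have h4 := h.2.2.2
    rwa [← this] at h4
  have hspp : Split D (i + 1) p p' := by
    have s1 : Split D (i + 1) p q := split_le hij hsp
    have s0 : Split D i p q := split_pred s1
    unfold Split at s0 s1
    rw [hi2] at s0
    rw [hi1] at s1
    have e : phiK D i (p ++ q) = (phiK D i p ++ [p']) ++ [q'] := by rw [s0]; simp
    have e1 := (split_of_eq e).2.1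
    simp only [List.flatten_append, List.flatten_cons, List.flatten_nil, List.append_nil,
      phiK_flatten] at e1
    have hr : D[i]? = some D[i] := List.getElem?_eq_getElem hiD
    unfold Split
    rw [phiK_stable hip' (Nat.le_succ i)]
    rw [phiK_succ, phiK_succ, hr] at s1 ⊢
    simp only at s1 ⊢
    rw [e1]
    rw [s0, hqe] at s1
    exact applyRule_pair _ _ _ _ hp'0 s1
  have hfin := split_glue hp0 (split_le hij hsap) hspp
  have hlast' := last_split hp'0 hfin
  rw [phiK_stable hip' (Nat.le_succ i), List.getLast?_singleton] at hlast'
  obtain ⟨hy0, hyc, hyl⟩ := theta_facts D (a ++ p ++ p') (by simp [hp0])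
  rw [hyl (i + 1) hiD] at hlast'
  refine ⟨inPath_of_last _ rfl hy0 hyc hlast', ?_⟩
  rintro - u hul huc hus ⟨n, hn⟩
  by_contra hcon
  obtain ⟨_, _, _, _, _, hu1, _⟩ := structure_facts hul huc
  have := last_ge n hy0 hyc hn (phiK_stable hu1 (by omega : canonIdx D u + 1 ≤ i + 1)) hlast'
  have h2 := suc_length_lt hul huc
  rw [hus] at h2
  omega

end BPE
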